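/- Let G be a graph on vertex set V and let S₁, S₂ ⊆ V be nonempty sets with S₁ ∪ S₂ = V such that no vertex u ∈ S₂ satisfies N[u] ∩ S₁ = S₁ (i.e., no vertex of S₂ is adjacent to, or equal to and adjacent to, every vertex of S₁, where N[u] = {u} ∪ {w : uw ∈ E(G)}). Let b* = box(G), let t be an integer with 1 ≤ t ≤ |S₁|, let β_t = β_t(S₁, S₂), and let t* = |S₂|(1 − 2b*(1 − β_t)). If t* ≤ 0, then box(G) ≥ 1/(2(1 − β_t)) (and 1 − β_t > 0 in this case). If t* > 0, then, with α* = α_{⌈t*⌉}(S₂, S₁), one has α* > 0, (1 − β_t) + (t−1)/(α*|S₂|) > 0, and box(G) ≥ 1/(2((1 − β_t) + (t−1)/(α*|S₂|))). -/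

import Mathlib

/-! Write `G = I₁ ∩ ⋯ ∩ I_b` with `b = box(G)` and fix interval representations `[L v, R v]`.
In one interval graph `I`, let `A` be the `t` vertices of `S₁` with the smallest right endpoints
and `p` the largest of these endpoints. Every vertex of `N[A, G]` has left endpoint at most `p`,
so at most `(1 - β)|S₂|` vertices of `S₂` have left endpoint exceeding `p`. The mirror image gives
a threshold `q` for the right endpoints of `S₂`. Hence, outside at most `2(1 - β)|S₂|` exceptional
vertices, each `u ∈ S₂` has `L u ≤ p` and `q ≤ R u`, so its only non-neighbours in `S₁` are among
the at most `t - 1` vertices with `R v < p` and the at most `t - 1` vertices with `L v > q`. These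
at most `2(t - 1)` vertices do not depend on `u` (`exists_exceptional`).

Uniting over the `b` interval graphs, at least `t* = |S₂|(1 - 2b(1 - β))` vertices of `S₂` are
unexceptional throughout, and together they have at most `2b(t - 1)` non-neighbours in `S₁`.
If `t* > 0`, then `α* ⌈t*⌉ ≤ 2b(t - 1)`, which rearranges to the bound. If `t* ≤ 0`, the bound
is a rearrangement of the definition of `t*`.
-/

/-- `I` is an interval graph: it can be represented by assigning to each vertex
a closed real interval so that two distinct vertices are adjacent in `I`
iff their intervals intersect. -/
def IsIntervalGraph {V : Type*} (I : SimpleGraph V) : Prop :=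
  ∃ f : V → Set ℝ, (∀ v, ∃ a b : ℝ, a ≤ b ∧ f v = Set.Icc a b) ∧
    ∀ u v : V, u ≠ v → (I.Adj u v ↔ (f u ∩ f v).Nonempty)

/-- The boxicity of `G`: the least `k` such that `G` is the intersection
(infimum) of `k` interval graphs on the same vertex set. -/
noncomputable def boxicity {V : Type*} (G : SimpleGraph V) : ℕ :=
  sInf {k : ℕ | ∃ I : Fin k → SimpleGraph V,
    (∀ i, IsIntervalGraph (I i)) ∧ G = ⨅ i, I i}

/-- The number of edges of `G`. -/
noncomputable def numEdges {V : Type*} (G : SimpleGraph V) : ℕ :=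
  G.edgeSet.ncard
/-- The co-expansion coefficient `α_t(A,B)`:
`(1/t) · min_{S ⊆ A, |S| = t} |N'(S, Ḡ) ∩ B|`. -/
noncomputable def coexp {V : Type*} (G : SimpleGraph V) (A B : Finset V) (t : ℕ) : ℝ :=
  (sInf {m : ℕ | ∃ S : Finset V, S ⊆ A ∧ S.card = t ∧
    ({b : V | b ∈ B ∧ ∃ a ∈ S, Gᶜ.Adj a b}).ncard = m} : ℕ) / (t : ℝ)
/-- The cross expansion coefficient `β_t(A,B)`:
`(1/|B|) · min_{S ⊆ A, |S| = t} |N[S,G] ∩ B|`. -/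
noncomputable def crossexp {V : Type*} (G : SimpleGraph V) (A B : Finset V) (t : ℕ) : ℝ :=
  (sInf {m : ℕ | ∃ S : Finset V, S ⊆ A ∧ S.card = t ∧
    ({b : V | b ∈ B ∧ (b ∈ S ∨ ∃ a ∈ S, G.Adj a b)}).ncard = m} : ℕ) / (B.card : ℝ)

/-- `G` is an intersection of `boxicity G` interval graphs, i.e. the infimum defining the boxicity
is over a nonempty set: for each non-edge, the complete graph minus that edge is an interval
graph. -/
lemma boxicity_spec {V : Type*} [Fintype V] (G : SimpleGraph V) :
    ∃ I : Fin (boxicity G) → SimpleGraph V,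
      (∀ i, IsIntervalGraph (I i)) ∧ G = ⨅ i, I i := by
  classical
  have hne : {k : ℕ | ∃ I : Fin k → SimpleGraph V,
      (∀ i, IsIntervalGraph (I i)) ∧ G = ⨅ i, I i}.Nonempty := by
    let P := {x : V × V // x.1 ≠ x.2 ∧ ¬ G.Adj x.1 x.2}
    let e : P ≃ Fin (Fintype.card P) := Fintype.equivFin P
    -- The endpoints of the missing edge get the intervals `[0, 0]` and `[1, 1]`, all other
    -- vertices get `[0, 1]`.
    let f : P → V → Set ℝ := fun x v =>
      Set.Icc (if v = x.1.2 then (1 : ℝ) else 0) (if v = x.1.1 then (0 : ℝ) else 1)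
    have hf : ∀ (x : P) (u v : V), u ≠ v → ((f x u ∩ f x v).Nonempty ↔
        ¬ ((u = x.1.1 ∧ v = x.1.2) ∨ (u = x.1.2 ∧ v = x.1.1))) := by
      rintro ⟨⟨a, b⟩, hab, hn⟩ u v huv
      simp only [f, Set.Icc_inter_Icc, Set.nonempty_Icc, sup_le_iff, le_inf_iff]
      simp only at hab
      have hba := hab.symm
      by_cases h1 : u = a <;> by_cases h2 : u = b <;> by_cases h3 : v = a <;>
        by_cases h4 : v = b <;> simp_all
    refine ⟨Fintype.card P, fun i =>
      { Adj := fun u v => u ≠ v ∧ (f (e.symm i) u ∩ f (e.symm i) v).Nonempty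
        symm := ⟨fun u v h => ⟨h.1.symm, by rw [Set.inter_comm]; exact h.2⟩⟩
        loopless := ⟨fun u h => h.1 rfl⟩ }, ?_, ?_⟩
    · intro i
      refine ⟨f (e.symm i), fun v => ⟨_, _, ?_, rfl⟩, fun u v huv => ?_⟩
      · have := (e.symm i).2.1
        split_ifs <;> simp_all
      · simp [huv]
    · ext u v
      simp only [SimpleGraph.iInf_adj]
      constructor
      · intro h
        refine ⟨fun i => ⟨h.ne, ?_⟩, h.ne⟩
        rw [hf _ _ _ h.ne]
        have hx := (e.symm i).2.2
        rintro (⟨rfl, rfl⟩ | ⟨rfl, rfl⟩)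
        · exact hx h
        · exact hx h.symm
      · rintro ⟨h, huv⟩
        by_contra hn
        have := (h (e ⟨(u, v), huv, hn⟩)).2
        rw [hf _ _ _ huv] at this
        simp at this
  exact Nat.sInf_mem hne

lemma exists_lowest_subset {V : Type*} [DecidableEq V] (f : V → ℝ) (S : Finset V) (t : ℕ)
    (ht : t ≤ S.card) :
    ∃ A ⊆ S, A.card = t ∧ ∀ a ∈ A, ∀ v ∈ S \ A, f a ≤ f v := by
  induction t with
  | zero => exact ⟨∅, by simp, by simp, by simp⟩
  | succ k ih =>
    obtain ⟨A, hA, hc, hle⟩ := ih (by omega)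
    have hne : (S \ A).Nonempty := by
      rw [← Finset.card_pos, Finset.card_sdiff_of_subset hA]
      omega
    obtain ⟨m, hm, hmin⟩ := Finset.exists_min_image (S \ A) f hne
    have hm' := Finset.mem_sdiff.1 hm
    refine ⟨insert m A, Finset.insert_subset hm'.1 hA, ?_, ?_⟩
    · rw [Finset.card_insert_of_notMem hm'.2, hc]
    · intro a ha v hv
      simp only [Finset.mem_sdiff, Finset.mem_insert, not_or] at hv
      have hv' : v ∈ S \ A := Finset.mem_sdiff.2 ⟨hv.1, hv.2.2⟩
      rcases Finset.mem_insert.1 ha with rfl | ha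
      · exact hmin v hv'
      · exact hle a ha v hv'

/-- The threshold `p` is the `t`-th smallest value of `f` on `S`. -/
lemma exists_threshold {V : Type*} [DecidableEq V] (f : V → ℝ) (S : Finset V) (t : ℕ)
    (ht1 : 1 ≤ t) (ht : t ≤ S.card) :
    ∃ A ⊆ S, A.card = t ∧ ∃ p : ℝ, (∀ a ∈ A, f a ≤ p) ∧
      (S.filter (fun v => f v < p)).card ≤ t - 1 := by
  obtain ⟨A, hA, hc, hle⟩ := exists_lowest_subset f S t ht
  obtain ⟨m, hm, hmax⟩ := Finset.exists_max_image A f (Finset.card_pos.1 (by omega))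
  refine ⟨A, hA, hc, f m, hmax, ?_⟩
  have : S.filter (fun v => f v < f m) ⊆ A.erase m := by
    intro v hv
    rw [Finset.mem_filter] at hv
    refine Finset.mem_erase.2 ⟨fun h => by simp [h] at hv, ?_⟩
    by_contra hvA
    exact absurd (hle m hm v (Finset.mem_sdiff.2 ⟨hv.1, hvA⟩)) (not_le.2 hv.2)
  have h := Finset.card_le_card this
  rwa [Finset.card_erase_of_mem hm, hc] at h

/-- A subset of `B` that avoids the closed neighbourhood of some `t`-subset of `A` has at most
`(1 - β_t(A, B))|B|` elements. -/
lemma card_le_of_avoids {V : Type*} [DecidableEq V] (G : SimpleGraph V)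
    (A B S W : Finset V) (hB : B.Nonempty) (hS : S ⊆ A) (hW : W ⊆ B)
    (hav : ∀ w ∈ W, w ∉ S ∧ ∀ a ∈ S, ¬ G.Adj a w) :
    (W.card : ℝ) ≤ (1 - crossexp G A B S.card) * (B.card : ℝ) := by
  classical
  have hpos : (0 : ℝ) < B.card := by exact_mod_cast hB.card_pos
  have hsInf := Nat.sInf_le (s := {m : ℕ | ∃ S' : Finset V, S' ⊆ A ∧ S'.card = S.card ∧
    ({b : V | b ∈ B ∧ (b ∈ S' ∨ ∃ a ∈ S', G.Adj a b)}).ncard = m}) ⟨S, hS, rfl, rfl⟩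
  have hle : ({b : V | b ∈ B ∧ (b ∈ S ∨ ∃ a ∈ S, G.Adj a b)}).ncard ≤ (B \ W).card := by
    rw [← Set.ncard_coe_finset]
    refine Set.ncard_le_ncard ?_ (Finset.finite_toSet _)
    rintro b ⟨hb, h⟩
    simp only [Finset.coe_sdiff, Set.mem_sdiff, Finset.mem_coe]
    refine ⟨hb, fun hbW => ?_⟩
    rcases h with h | ⟨a, ha, hab⟩
    · exact (hav b hbW).1 h
    · exact (hav b hbW).2 a ha hab
  have hcard := Finset.card_sdiff_add_card_eq_card hW
  have key := hsInf.trans hle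
  have hx : crossexp G A B S.card * (B.card : ℝ) ≤ ((B \ W).card : ℝ) := by
    unfold crossexp
    rw [div_mul_cancel₀ _ hpos.ne']
    exact_mod_cast key
  have hcard' : ((B \ W).card : ℝ) + W.card = B.card := by exact_mod_cast hcard
  linarith

/-- In an interval supergraph `I` of `G`, all but at most `2(1 - β)|S₂|` vertices of `S₂` (the set
`P`) are adjacent to all of `S₁` outside a common set `Q` of at most `2(t - 1)` vertices. -/
lemma exists_exceptional {V : Type*} [DecidableEq V] (G I : SimpleGraph V)
    (hGI : G ≤ I) (hI : IsIntervalGraph I) (S₁ S₂ : Finset V) (h2 : S₂.Nonempty)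
    (t : ℕ) (ht1 : 1 ≤ t) (ht2 : t ≤ S₁.card) :
    ∃ P Q : Finset V, (P.card : ℝ) ≤ 2 * (1 - crossexp G S₁ S₂ t) * (S₂.card : ℝ) ∧
      Q.card ≤ 2 * (t - 1) ∧
      ∀ u ∈ S₂, u ∉ P → ∀ v ∈ S₁, v ∉ Q → u ≠ v → I.Adj u v := by
  classical
  obtain ⟨f, hf, hadj⟩ := hI
  choose L R hLR hfeq using hf
  have hadj' : ∀ u v, u ≠ v → (I.Adj u v ↔ L u ≤ R v ∧ L v ≤ R u) := by
    intro u v huv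
    rw [hadj u v huv, hfeq, hfeq, Set.Icc_inter_Icc, Set.nonempty_Icc, sup_le_iff, le_inf_iff,
      le_inf_iff]
    have hu := hLR u
    have hv := hLR v
    tauto
  obtain ⟨A, hA, hAc, p, hAp, hp⟩ := exists_threshold R S₁ t ht1 ht2
  obtain ⟨B, hB, hBc, q, hBq, hq⟩ := exists_threshold (fun v => - L v) S₁ t ht1 ht2
  have c1 := card_le_of_avoids G S₁ S₂ A (S₂.filter (fun u => p < L u)) h2 hA
    (Finset.filter_subset _ _) (by
      intro w hw
      have hw := (Finset.mem_filter.1 hw).2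
      refine ⟨fun h => ?_, fun a ha h => ?_⟩
      · linarith [hAp w h, hLR w]
      · have := (hadj' a w h.ne).1 (hGI h)
        linarith [hAp a ha, this.2])
  have c2 := card_le_of_avoids G S₁ S₂ B (S₂.filter (fun u => R u < -q)) h2 hB
    (Finset.filter_subset _ _) (by
      intro w hw
      have hw := (Finset.mem_filter.1 hw).2
      refine ⟨fun h => ?_, fun a ha h => ?_⟩
      · linarith [hBq w h, hLR w]
      · have := (hadj' a w h.ne).1 (hGI h)
        linarith [hBq a ha, this.1])
  rw [hAc] at c1
  rw [hBc] at c2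
  refine ⟨S₂.filter (fun u => p < L u) ∪ S₂.filter (fun u => R u < -q),
    S₁.filter (fun v => R v < p) ∪ S₁.filter (fun v => - L v < q), ?_, ?_, ?_⟩
  · have : ((S₂.filter (fun u => p < L u) ∪ S₂.filter (fun u => R u < -q)).card : ℝ) ≤
        (S₂.filter (fun u => p < L u)).card + (S₂.filter (fun u => R u < -q)).card := by
      exact_mod_cast Finset.card_union_le _ _
    linarith
  · have := Finset.card_union_le (S₁.filter (fun v => R v < p)) (S₁.filter (fun v => - L v < q))
    omega
  · intro u hu huP v hv hvQ huv
    simp only [Finset.mem_union, Finset.mem_filter, hu, hv, true_and, not_or, not_lt] at huP hvQ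
    rw [hadj' u v huv]
    constructor <;> linarith [huP.1, huP.2, hvQ.1, hvQ.2]

lemma coexp_mul_le {V : Type*} (G : SimpleGraph V) (A B S : Finset V) (hS : S ⊆ A)
    (hpos : 0 < S.card) :
    coexp G A B S.card * S.card ≤ ({b : V | b ∈ B ∧ ∃ a ∈ S, Gᶜ.Adj a b}).ncard := by
  have hsInf := Nat.sInf_le (s := {m : ℕ | ∃ S' : Finset V, S' ⊆ A ∧ S'.card = S.card ∧
    ({b : V | b ∈ B ∧ ∃ a ∈ S', Gᶜ.Adj a b}).ncard = m}) ⟨S, hS, rfl, rfl⟩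
  have : (0 : ℝ) < S.card := by exact_mod_cast hpos
  unfold coexp
  rw [div_mul_cancel₀ _ this.ne']
  exact_mod_cast hsInf

lemma coexp_pos {V : Type*} (G : SimpleGraph V) (A B : Finset V) (s : ℕ)
    (hs : 0 < s) (hsA : s ≤ A.card) (hno : ∀ u ∈ A, ¬(∀ v ∈ B, v = u ∨ G.Adj u v)) :
    0 < coexp G A B s := by
  have hne : {m : ℕ | ∃ S : Finset V, S ⊆ A ∧ S.card = s ∧
      ({b : V | b ∈ B ∧ ∃ a ∈ S, Gᶜ.Adj a b}).ncard = m}.Nonempty := by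
    obtain ⟨S, hS, hc⟩ := Finset.exists_subset_card_eq hsA
    exact ⟨_, S, hS, hc, rfl⟩
  obtain ⟨S, hS, hc, hm⟩ := Nat.sInf_mem hne
  unfold coexp
  refine div_pos ?_ (by exact_mod_cast hs)
  rw [← hm]
  norm_cast
  obtain ⟨u, hu⟩ := Finset.card_pos.1 (hc ▸ hs)
  have := hno u (hS hu)
  push Not at this
  obtain ⟨v, hv, hvu, hn⟩ := this
  refine (Set.ncard_pos (B.finite_toSet.subset fun b hb => hb.1)).2 ⟨v, hv, u, hu, ?_⟩
  rw [SimpleGraph.compl_adj]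
  exact ⟨hvu.symm, hn⟩

/-- If `b ≥ 0` and `1 ≤ 2bX`, then `X > 0` and `b ≥ 1/(2X)`. -/
lemma pos_and_ge_of_one_le {b X : ℝ} (hb : 0 ≤ b) (h : 1 ≤ 2 * b * X) :
    0 < X ∧ b ≥ 1 / (2 * X) := by
  have hX : 0 < X := by
    by_contra hX
    nlinarith
  refine ⟨hX, ?_⟩
  rw [ge_iff_le, div_le_iff₀ (by positivity)]
  linarith

theorem box_main_lower_bound {V : Type*} [Fintype V] [DecidableEq V] (G : SimpleGraph V)
    (S₁ S₂ : Finset V) (h1 : S₁.Nonempty) (h2 : S₂.Nonempty)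
    (hcover : S₁ ∪ S₂ = Finset.univ)
    (hno : ∀ u ∈ S₂, ¬(∀ v ∈ S₁, v = u ∨ G.Adj u v))
    (t : ℕ) (ht1 : 1 ≤ t) (ht2 : t ≤ S₁.card)
    (β : ℝ) (hβ : β = crossexp G S₁ S₂ t)
    (tstar : ℝ)
    (htstar : tstar = (S₂.card : ℝ) * (1 - 2 * (boxicity G : ℝ) * (1 - β))) :
    (tstar ≤ 0 → 0 < 1 - β ∧ (boxicity G : ℝ) ≥ 1 / (2 * (1 - β))) ∧
    (0 < tstar →
      0 < coexp G S₂ S₁ ⌈tstar⌉₊ ∧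
      0 < (1 - β) + ((t : ℝ) - 1) / (coexp G S₂ S₁ ⌈tstar⌉₊ * (S₂.card : ℝ)) ∧
      (boxicity G : ℝ) ≥
        1 / (2 * ((1 - β) +
          ((t : ℝ) - 1) / (coexp G S₂ S₁ ⌈tstar⌉₊ * (S₂.card : ℝ))))) := by
  have hn2 : (0 : ℝ) < S₂.card := by exact_mod_cast h2.card_pos
  have hb : (0 : ℝ) ≤ boxicity G := Nat.cast_nonneg _
  refine ⟨fun h => ?_, fun hpos => ?_⟩
  · refine pos_and_ge_of_one_le hb ?_
    by_contra hlt
    have : 0 < tstar := by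
      rw [htstar]
      exact mul_pos hn2 (by linarith)
    linarith
  -- `1 - β ≥ 0`, by applying the avoidance bound to the empty subset of `S₂`.
  have hβ1 : 0 ≤ 1 - β := by
    obtain ⟨S, hS, hc⟩ := Finset.exists_subset_card_eq ht2
    have := card_le_of_avoids G S₁ S₂ S ∅ h2 hS (by simp) (by simp)
    rw [hc, ← hβ] at this
    simp only [Finset.card_empty, Nat.cast_zero] at this
    exact nonneg_of_mul_nonneg_left this hn2
  set s := ⌈tstar⌉₊ with hs
  have hs0 : 0 < s := Nat.ceil_pos.2 hpos
  have hsS : s ≤ S₂.card := by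
    refine Nat.ceil_le.2 ?_
    rw [htstar]
    have : 0 ≤ 2 * (boxicity G : ℝ) * (1 - β) := by positivity
    nlinarith
  have hα := coexp_pos G S₂ S₁ s hs0 hsS hno
  refine ⟨hα, pos_and_ge_of_one_le hb ?_⟩
  obtain ⟨I, hI, hG⟩ := boxicity_spec G
  have hGI : ∀ i, G ≤ I i := fun i => hG.le.trans (iInf_le I i)
  choose P Q hP hQ hPQ using fun i =>
    exists_exceptional G (I i) (hGI i) (hI i) S₁ S₂ h2 t ht1 ht2
  rw [← hβ] at hP
  -- `T` is the set of vertices of `S₂` that are unexceptional in every interval graph.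
  let T := S₂ \ Finset.univ.biUnion P
  have hT : s ≤ T.card := by
    refine Nat.ceil_le.2 ?_
    have e1 : S₂.card ≤ T.card + (Finset.univ.biUnion P).card := by
      have := Finset.le_card_sdiff (Finset.univ.biUnion P) S₂
      simp only [T]
      omega
    have e2 : ((Finset.univ.biUnion P).card : ℝ) ≤
        boxicity G * (2 * (1 - β) * (S₂.card : ℝ)) := by
      calc ((Finset.univ.biUnion P).card : ℝ) ≤ ∑ i, ((P i).card : ℝ) := by
            exact_mod_cast Finset.card_biUnion_le
        _ ≤ ∑ _i : Fin (boxicity G), (2 * (1 - β) * (S₂.card : ℝ)) :=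
            Finset.sum_le_sum fun i _ => hP i
        _ = _ := by simp
    have e3 : (S₂.card : ℝ) ≤ T.card + (Finset.univ.biUnion P).card := by exact_mod_cast e1
    rw [htstar]
    linarith
  obtain ⟨S, hST, hSc⟩ := Finset.exists_subset_card_eq hT
  have hSS : S ⊆ S₂ := hST.trans Finset.sdiff_subset
  have hlow := coexp_mul_le G S₂ S₁ S hSS (by omega)
  rw [hSc] at hlow
  have hup : ({b : V | b ∈ S₁ ∧ ∃ a ∈ S, Gᶜ.Adj a b}).ncard ≤ boxicity G * (2 * (t - 1)) := by
    calc _ ≤ (Finset.univ.biUnion Q).card := by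
          rw [← Set.ncard_coe_finset]
          refine Set.ncard_le_ncard ?_ (Finset.finite_toSet _)
          rintro v ⟨hv, u, hu, huv⟩
          rw [SimpleGraph.compl_adj] at huv
          by_contra hvQ
          simp only [Finset.mem_coe, Finset.mem_biUnion, Finset.mem_univ, true_and,
            not_exists] at hvQ
          have huT := Finset.mem_sdiff.1 (hST hu)
          simp only [Finset.mem_biUnion, Finset.mem_univ, true_and, not_exists] at huT
          refine huv.2 ?_
          rw [hG, SimpleGraph.iInf_adj]
          exact ⟨fun i => hPQ i u huT.1 (huT.2 i) v hv (hvQ i) huv.1, huv.1⟩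
      _ ≤ ∑ i, (Q i).card := Finset.card_biUnion_le
      _ ≤ ∑ _i : Fin (boxicity G), 2 * (t - 1) := Finset.sum_le_sum fun i _ => hQ i
      _ = _ := by simp
  have hup' : (({b : V | b ∈ S₁ ∧ ∃ a ∈ S, Gᶜ.Adj a b}).ncard : ℝ) ≤
      boxicity G * (2 * ((t : ℝ) - 1)) := by
    have h : ((t - 1 : ℕ) : ℝ) = (t : ℝ) - 1 := by push_cast [Nat.cast_sub ht1]; ring
    rw [← h]
    exact_mod_cast hup
  have hmain : coexp G S₂ S₁ s * tstar ≤ boxicity G * (2 * ((t : ℝ) - 1)) :=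
    (mul_le_mul_of_nonneg_left (Nat.le_ceil tstar) hα.le).trans (hlow.trans hup')
  rw [htstar] at hmain
  have hc : 0 < coexp G S₂ S₁ s * (S₂.card : ℝ) := mul_pos hα hn2
  have hdiv : 1 - 2 * (boxicity G : ℝ) * (1 - β) ≤
      boxicity G * (2 * ((t : ℝ) - 1)) / (coexp G S₂ S₁ s * (S₂.card : ℝ)) := by
    rw [le_div_iff₀ hc]
    linarith
  have hsplit : 2 * (boxicity G : ℝ) *
      ((1 - β) + ((t : ℝ) - 1) / (coexp G S₂ S₁ s * (S₂.card : ℝ))) =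
      2 * (boxicity G : ℝ) * (1 - β) +
        boxicity G * (2 * ((t : ℝ) - 1)) / (coexp G S₂ S₁ s * (S₂.card : ℝ)) := by
    ring
  rw [hsplit]
  linarith
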